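/- arXiv:math/0512053 — 2 statements merged into one kernel-verified Lean document; each statement's English description precedes it below -/
import Mathlib

section
/- Let g : ℝ → ℝ be real-analytic, odd, 2π-periodic, not identically zero, and satisfy g'' + A(g)(3⟨g²⟩ g + g³) = 0 on ℝ, where A(g) := ⟨g⁴⟩ + 3⟨g²⟩². Consider the homogeneous linear equation (HOM): h''(t) + 3A(g)(⟨g²⟩ + g(t)²) h(t) = 0. Then: (i) g'(0) ≠ 0, and ū(t) := g'(t)/g'(0) is an even, 2π-periodic solution of (HOM) with ū(0) = 1, ū'(0) = 0; (ii) the solution v̄ of (HOM) with v̄(0) = 0, v̄'(0) = 1 is odd and not periodic; (iii) there exists ρ > 0 such that v̄(t + 2π) − v̄(t) = ρ ū(t) for all t ∈ ℝ. -/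
/-!
Let `T` be a period of `g`. Differentiating `g'' + A (3 m g + g³) = 0` shows that `u = g' / g'(0)`
solves the linearized equation; let `v` be its solution with `v 0 = 0` and `v' 0 = 1`. Since
`t ↦ v (t + T)` is again a solution and the Wronskian of `u` and `v` is `1`, we get
`v (t + T) = v t + v T * u t`, so all that is left is the sign of `v T`. A multiple of `v` is given
explicitly by a combination of `g`, `g³`, `t g'` and `g' ∫ g²`, and, as `A ≥ 0`, conservation of
energy bounds `3 A m g²` by `g'(0)²`, whence `v T > 0`.
-/

open Real

/-- Average of a function over one period `[0, 2π]`. -/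
noncomputable def avg (f : ℝ → ℝ) : ℝ := (1 / (2 * π)) * ∫ t in (0:ℝ)..(2 * π), f t

theorem avg_nonneg {f : ℝ → ℝ} (hf : ∀ t, 0 ≤ f t) : 0 ≤ avg f :=
  mul_nonneg (by positivity)
    (intervalIntegral.integral_nonneg two_pi_pos.le fun t _ => hf t)

section Calculus

variable {𝕜 F : Type*} [NontriviallyNormedField 𝕜] [NormedAddCommGroup F] [NormedSpace 𝕜 F]

theorem periodic_deriv {f : 𝕜 → F} {T : 𝕜} (hf : Function.Periodic f T) :
    Function.Periodic (deriv f) T := fun t => by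
  rw [← deriv_comp_add_const, hf.funext]

theorem even_deriv_of_odd {f : 𝕜 → F} (hf : Function.Odd f) : Function.Even (deriv f) :=
  fun t => by
    have hf' : (fun s => f (-s)) = fun s => -f s := funext hf
    rw [← neg_inj, ← deriv_comp_neg, hf', deriv.fun_neg]

theorem eq_zero_of_norm_deriv_le_mul_norm {E : Type*} [NormedAddCommGroup E] [NormedSpace ℝ E]
    {f : ℝ → E} {K t₀ : ℝ} (hf : Differentiable ℝ f) (bound : ∀ t, ‖deriv f t‖ ≤ K * ‖f t‖)
    (h₀ : f t₀ = 0) : f = 0 := by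
  funext t
  rcases le_total t₀ t with ht | ht
  · exact eq_zero_of_abs_deriv_le_mul_abs_self_of_eq_zero_right hf.continuous.continuousOn
      (fun s _ => (hf s).hasDerivAt.hasDerivWithinAt) h₀ (fun s _ => bound s) t ⟨ht, le_rfl⟩
  · have hneg : Differentiable ℝ fun s => f (-s) := hf.comp differentiable_neg
    have := eq_zero_of_abs_deriv_le_mul_abs_self_of_eq_zero_right hneg.continuous.continuousOn
      (fun s _ => (hneg s).hasDerivAt.hasDerivWithinAt) (a := -t₀) (by simpa using h₀)
      (fun s _ => by simpa only [deriv_comp_neg, norm_neg] using bound (-s)) (-t)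
      ⟨neg_le_neg ht, le_rfl⟩
    simpa using this

end Calculus

section QuasiPeriodic

theorem apply_add_nsmul_of_apply_add_eq {α β : Type*} [AddMonoid α] [AddMonoid β] {f w : α → β}
    {T : α} (hw : Function.Periodic w T) (h : ∀ t, f (t + T) = f t + w t) (n : ℕ) (t : α) :
    f (t + n • T) = f t + n • w t := by
  induction n with
  | zero => simp
  | succ n ih => rw [succ_nsmul, ← add_assoc, h, ih, hw.nsmul n t, succ_nsmul, add_assoc]

theorem not_isBounded_range_of_apply_add_eq {α E : Type*} [AddMonoid α] [NormedAddCommGroup E]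
    [NormedSpace ℝ E] {f w : α → E} {T : α} (hw : Function.Periodic w T) (hw₀ : w ≠ 0)
    (h : ∀ t, f (t + T) = f t + w t) : ¬ Bornology.IsBounded (Set.range f) := by
  intro hf
  obtain ⟨C, hC⟩ := hf.exists_norm_le
  obtain ⟨t, ht⟩ := Function.ne_iff.1 hw₀
  obtain ⟨n, hn⟩ := Archimedean.arch (2 * C + 1) (norm_pos_iff.2 ht)
  have increment : n • w t = f (t + n • T) - f t := by
    rw [apply_add_nsmul_of_apply_add_eq hw h, add_sub_cancel_left]
  have : n • ‖w t‖ ≤ 2 * C := calc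
    n • ‖w t‖ = ‖f (t + n • T) - f t‖ := by rw [← increment, RCLike.norm_nsmul ℝ]
    _ ≤ ‖f (t + n • T)‖ + ‖f t‖ := norm_sub_le _ _
    _ ≤ C + C := add_le_add (hC _ ⟨_, rfl⟩) (hC _ ⟨_, rfl⟩)
    _ = 2 * C := (two_mul C).symm
  linarith

end QuasiPeriodic

/-- `y` is a solution on `ℝ` of Hill's equation `y'' + q y = 0`. -/
structure IsHillSolution (q y : ℝ → ℝ) : Prop where
  differentiable : Differentiable ℝ y
  hasDerivAt_deriv : ∀ t, HasDerivAt (deriv y) (-(q t * y t)) t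

namespace IsHillSolution

variable {q x y y' : ℝ → ℝ} {T : ℝ}

theorem of_hasDerivAt (hy : ∀ t, HasDerivAt y (y' t) t)
    (hy' : ∀ t, HasDerivAt y' (-(q t * y t)) t) : IsHillSolution q y where
  differentiable t := (hy t).differentiableAt
  hasDerivAt_deriv := by rwa [show deriv y = y' from deriv_eq hy]

theorem of_contDiff (hy : ContDiff ℝ 2 y) (h : ∀ t, deriv (deriv y) t + q t * y t = 0) :
    IsHillSolution q y where
  differentiable := hy.differentiable two_ne_zero
  hasDerivAt_deriv t := by
    rw [← eq_neg_of_add_eq_zero_left (h t)]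
    exact (hy.differentiable_deriv_two t).hasDerivAt

theorem hasDerivAt (hy : IsHillSolution q y) (t : ℝ) : HasDerivAt y (deriv y t) t :=
  (hy.differentiable t).hasDerivAt

theorem deriv_deriv_add_eq_zero (hy : IsHillSolution q y) (t : ℝ) :
    deriv (deriv y) t + q t * y t = 0 := by
  rw [(hy.hasDerivAt_deriv t).deriv, neg_add_cancel]

theorem div_const (hy : IsHillSolution q y) (c : ℝ) : IsHillSolution q fun t => y t / c :=
  of_hasDerivAt (fun t => (hy.hasDerivAt t).div_const c) fun t =>
    ((hy.hasDerivAt_deriv t).div_const c).congr_deriv (by ring)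

theorem comp_neg (hy : IsHillSolution q y) (hq : Function.Even q) :
    IsHillSolution q fun t => y (-t) :=
  of_hasDerivAt (y' := fun t => -deriv y (-t))
    (fun t => ((hy.hasDerivAt (-t)).comp t (hasDerivAt_neg t)).congr_deriv (by ring))
    fun t => (((hy.hasDerivAt_deriv (-t)).comp t (hasDerivAt_neg t)).fun_neg).congr_deriv
      (by rw [hq]; ring)

theorem comp_add_const (hy : IsHillSolution q y) (hq : Function.Periodic q T) :
    IsHillSolution q fun t => y (t + T) :=
  of_hasDerivAt (fun t => (hy.hasDerivAt (t + T)).comp_add_const t T) fun t =>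
    ((hy.hasDerivAt_deriv (t + T)).comp_add_const t T).congr_deriv (by rw [hq])

theorem wronskian_eq (hx : IsHillSolution q x) (hy : IsHillSolution q y) (s t : ℝ) :
    x t * deriv y t - deriv x t * y t = x s * deriv y s - deriv x s * y s := by
  have hW : ∀ r, HasDerivAt (fun r => x r * deriv y r - deriv x r * y r) 0 r := fun r =>
    (((hx.hasDerivAt r).fun_mul (hy.hasDerivAt_deriv r)).fun_sub
      ((hx.hasDerivAt_deriv r).fun_mul (hy.hasDerivAt r))).congr_deriv (by ring)
  exact is_const_of_deriv_eq_zero (fun r => (hW r).differentiableAt) (fun r => (hW r).deriv) t s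

end IsHillSolution

/-- `u` and `v` are the normalized solutions of Hill's equation `y'' + q y = 0`, that is, the
fundamental system whose Wronskian matrix at `0` is the identity. -/
structure IsNormalizedPair (q u v : ℝ → ℝ) : Prop where
  left : IsHillSolution q u
  right : IsHillSolution q v
  left_zero : u 0 = 1
  deriv_left_zero : deriv u 0 = 0
  right_zero : v 0 = 0
  deriv_right_zero : deriv v 0 = 1

namespace IsNormalizedPair

variable {q u v x : ℝ → ℝ} {T : ℝ}

theorem wronskian_eq_one (h : IsNormalizedPair q u v) (t : ℝ) :
    u t * deriv v t - deriv u t * v t = 1 := by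
  simpa [h.left_zero, h.deriv_left_zero, h.right_zero, h.deriv_right_zero]
    using h.left.wronskian_eq h.right 0 t

theorem eq_linear_combination (h : IsNormalizedPair q u v) (hx : IsHillSolution q x) (t : ℝ) :
    x t = x 0 * u t + deriv x 0 * v t := by
  have hux : u t * deriv x t - deriv u t * x t = deriv x 0 := by
    simpa [h.left_zero, h.deriv_left_zero] using h.left.wronskian_eq hx 0 t
  have hxv : x t * deriv v t - deriv x t * v t = x 0 := by
    simpa [h.right_zero, h.deriv_right_zero] using hx.wronskian_eq h.right 0 t
  linear_combination u t * hxv + v t * hux - x t * h.wronskian_eq_one t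

theorem odd_right (h : IsNormalizedPair q u v) (hq : Function.Even q) :
    Function.Odd v := fun t => by
  simpa [deriv_comp_neg, h.right_zero, h.deriv_right_zero]
    using h.eq_linear_combination (h.right.comp_neg hq) t

theorem right_add_period (h : IsNormalizedPair q u v) (hq : Function.Periodic q T)
    (hu : Function.Periodic u T) (t : ℝ) : v (t + T) = v t + v T * u t := by
  have deriv_right_period : deriv v T = 1 := by
    simpa [hu.eq, (periodic_deriv hu).eq, h.left_zero, h.deriv_left_zero]
      using h.wronskian_eq_one T
  have := h.eq_linear_combination (h.right.comp_add_const hq) t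
  rw [deriv_comp_add_const, zero_add, deriv_right_period] at this
  linear_combination this

theorem not_periodic_right (h : IsNormalizedPair q u v) (hq : Function.Periodic q T)
    (hu : Function.Periodic u T) (hvT : v T ≠ 0) {p : ℝ} (hp : p ≠ 0) :
    ¬ Function.Periodic v p := fun hv =>
  not_isBounded_range_of_apply_add_eq (hu.smul (v T))
    (Function.ne_iff.2 ⟨0, by simpa [h.left_zero] using hvT⟩) (h.right_add_period hq hu)
    (hv.isBounded_of_continuous hp h.right.differentiable.continuous)

end IsNormalizedPair

/-- `g` is a solution on `ℝ` of the Duffing equation `g'' + A (3 m g + g³) = 0`. The linear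
coefficient is written `3 A m`, as in the application where `m` is the mean of `g²`. -/
structure IsDuffingSolution (A m : ℝ) (g : ℝ → ℝ) : Prop where
  differentiable : Differentiable ℝ g
  hasDerivAt_deriv : ∀ t, HasDerivAt (deriv g) (-(A * (3 * m * g t + g t ^ 3))) t

/-- The potential `q` for which `h'' + q h = 0` is the linearization of the Duffing equation
`g'' + A (3 m g + g³) = 0` at `g`. -/
def duffingPotential (A m : ℝ) (g : ℝ → ℝ) (t : ℝ) : ℝ := 3 * A * (m + g t ^ 2)

theorem even_duffingPotential {A m : ℝ} {g : ℝ → ℝ} (hg : Function.Odd g) :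
    Function.Even (duffingPotential A m g) := fun t => by
  rw [duffingPotential, hg, neg_sq, duffingPotential]

theorem periodic_duffingPotential {A m T : ℝ} {g : ℝ → ℝ} (hg : Function.Periodic g T) :
    Function.Periodic (duffingPotential A m g) T :=
  hg.comp fun y => 3 * A * (m + y ^ 2)

/-- The coefficient of `g'` in `duffingSecond`. It is the one term that is not `T`-periodic when `g`
is: its increment over a period is the source of the monodromy. -/
noncomputable def secularFactor (A m : ℝ) (g : ℝ → ℝ) (t : ℝ) : ℝ :=
  2 * deriv g 0 ^ 2 * t - 3 * A * m * ∫ s in (0:ℝ)..t, g s ^ 2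

/-- A solution of the linearization of the Duffing equation at a solution `g` with `g 0 = 0`,
independent of `g'`. It is the combination of `g`, `g³`, `t g'` and `g' ∫ g²` whose images under the
linearized operator cancel by conservation of energy. -/
noncomputable def duffingSecond (A m : ℝ) (g : ℝ → ℝ) (t : ℝ) : ℝ :=
  3 * A * m * g t ^ 3 + 2 * (9 * A * m ^ 2 + deriv g 0 ^ 2) * g t
    + deriv g t * secularFactor A m g t

/-- The derivative of `duffingSecond`, with `g''` eliminated by the Duffing equation. -/
noncomputable def duffingSecondDeriv (A m : ℝ) (g : ℝ → ℝ) (t : ℝ) : ℝ :=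
  6 * A * m * g t ^ 2 * deriv g t + 2 * (9 * A * m ^ 2 + 2 * deriv g 0 ^ 2) * deriv g t
    - A * (3 * m * g t + g t ^ 3) * secularFactor A m g t

namespace IsDuffingSolution

variable {A m T : ℝ} {g v : ℝ → ℝ}

theorem of_contDiff (hg : ContDiff ℝ 2 g)
    (h : ∀ t, deriv (deriv g) t + A * (3 * m * g t + g t ^ 3) = 0) : IsDuffingSolution A m g where
  differentiable := hg.differentiable two_ne_zero
  hasDerivAt_deriv t := by
    rw [← eq_neg_of_add_eq_zero_left (h t)]
    exact (hg.differentiable_deriv_two t).hasDerivAt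

theorem hasDerivAt (hg : IsDuffingSolution A m g) (t : ℝ) : HasDerivAt g (deriv g t) t :=
  (hg.differentiable t).hasDerivAt

theorem deriv_deriv_zero (hg : IsDuffingSolution A m g) (h₀ : g 0 = 0) :
    deriv (deriv g) 0 = 0 := by
  simpa [h₀] using (hg.hasDerivAt_deriv 0).deriv

theorem energy_eq (hg : IsDuffingSolution A m g) (s t : ℝ) :
    2 * deriv g t ^ 2 + A * (6 * m * g t ^ 2 + g t ^ 4)
      = 2 * deriv g s ^ 2 + A * (6 * m * g s ^ 2 + g s ^ 4) := by
  have hE : ∀ r, HasDerivAt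
      (fun r => 2 * deriv g r ^ 2 + A * (6 * m * g r ^ 2 + g r ^ 4)) 0 r := fun r =>
    ((((hg.hasDerivAt_deriv r).fun_pow 2).const_mul 2).fun_add
      (((((hg.hasDerivAt r).fun_pow 2).const_mul (6 * m)).fun_add
        ((hg.hasDerivAt r).fun_pow 4)).const_mul A)).congr_deriv (by push_cast; ring)
  exact is_const_of_deriv_eq_zero (fun r => (hE r).differentiableAt) (fun r => (hE r).deriv) t s

theorem energy_eq_of_zero (hg : IsDuffingSolution A m g) (h₀ : g 0 = 0) (t : ℝ) :
    2 * deriv g t ^ 2 + A * (6 * m * g t ^ 2 + g t ^ 4) = 2 * deriv g 0 ^ 2 := by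
  simpa [h₀] using hg.energy_eq 0 t

theorem deriv_zero_ne_zero (hg : IsDuffingSolution A m g) (hA : 0 ≤ A) (h₀ : g 0 = 0)
    (hne : g ≠ 0) : deriv g 0 ≠ 0 := by
  intro h₀'
  have deriv_sq_le : ∀ t, deriv g t ^ 2 ≤ |3 * A * m| * g t ^ 2 := fun t => by
    have hE := hg.energy_eq_of_zero h₀ t
    rw [h₀'] at hE
    have quartic_nonneg : 0 ≤ A * g t ^ 4 := by positivity
    calc deriv g t ^ 2 ≤ -(3 * A * m) * g t ^ 2 := by linarith
      _ ≤ |3 * A * m| * g t ^ 2 := by gcongr; exact neg_le_abs _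
  refine hne (eq_zero_of_norm_deriv_le_mul_norm (K := √|3 * A * m|) hg.differentiable
    (fun t => abs_le_of_sq_le_sq ?_ (by positivity)) h₀)
  rw [mul_pow, sq_sqrt (abs_nonneg _), norm_eq_abs, sq_abs]
  exact deriv_sq_le t

theorem mul_integral_sq_le (hg : IsDuffingSolution A m g) (hA : 0 ≤ A) (h₀ : g 0 = 0)
    (hT : 0 ≤ T) : 3 * A * m * ∫ s in (0:ℝ)..T, g s ^ 2 ≤ deriv g 0 ^ 2 * T := by
  have pointwise : ∀ s, 3 * A * m * g s ^ 2 ≤ deriv g 0 ^ 2 := fun s => by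
    have quartic_nonneg : 0 ≤ A * g s ^ 4 := by positivity
    linarith [hg.energy_eq_of_zero h₀ s, sq_nonneg (deriv g s)]
  have hcont : Continuous fun s => 3 * A * m * g s ^ 2 :=
    (hg.differentiable.continuous.pow 2).const_mul _
  calc 3 * A * m * ∫ s in (0:ℝ)..T, g s ^ 2
      = ∫ s in (0:ℝ)..T, 3 * A * m * g s ^ 2 := by rw [intervalIntegral.integral_const_mul]
    _ ≤ ∫ _ in (0:ℝ)..T, deriv g 0 ^ 2 :=
      intervalIntegral.integral_mono_on hT (hcont.intervalIntegrable 0 T)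
        intervalIntegrable_const fun s _ => pointwise s
    _ = deriv g 0 ^ 2 * T := by
      rw [intervalIntegral.integral_const, smul_eq_mul, sub_zero, mul_comm]

theorem hasDerivAt_restoringForce (hg : IsDuffingSolution A m g) (t : ℝ) :
    HasDerivAt (fun s => A * (3 * m * g s + g s ^ 3)) (duffingPotential A m g t * deriv g t) t :=
  ((((hg.hasDerivAt t).const_mul (3 * m)).fun_add ((hg.hasDerivAt t).fun_pow 3)).const_mul
    A).congr_deriv (by rw [duffingPotential]; push_cast; ring)

theorem isHillSolution_deriv (hg : IsDuffingSolution A m g) :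
    IsHillSolution (duffingPotential A m g) (deriv g) :=
  .of_hasDerivAt hg.hasDerivAt_deriv fun t => (hg.hasDerivAt_restoringForce t).fun_neg

theorem hasDerivAt_secularFactor (hg : IsDuffingSolution A m g) (t : ℝ) :
    HasDerivAt (secularFactor A m g) (2 * deriv g 0 ^ 2 - 3 * A * m * g t ^ 2) t :=
  (((hasDerivAt_id' t).const_mul _).fun_sub
    (((hg.differentiable.continuous.pow 2).integral_hasStrictDerivAt 0 t).hasDerivAt.const_mul
      _)).congr_deriv (by rw [mul_one, Pi.pow_apply])

theorem hasDerivAt_duffingSecond (hg : IsDuffingSolution A m g) (t : ℝ) :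
    HasDerivAt (duffingSecond A m g) (duffingSecondDeriv A m g t) t :=
  (((((hg.hasDerivAt t).fun_pow 3).const_mul _).fun_add ((hg.hasDerivAt t).const_mul _)).fun_add
    ((hg.hasDerivAt_deriv t).fun_mul (hg.hasDerivAt_secularFactor t))).congr_deriv
      (by rw [duffingSecondDeriv]; push_cast; ring)

theorem hasDerivAt_duffingSecondDeriv (hg : IsDuffingSolution A m g) (h₀ : g 0 = 0) (t : ℝ) :
    HasDerivAt (duffingSecondDeriv A m g)
      (-(duffingPotential A m g t * duffingSecond A m g t)) t := by
  refine ((((((hg.hasDerivAt t).fun_pow 2).const_mul _).fun_mul (hg.hasDerivAt_deriv t)).fun_add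
    ((hg.hasDerivAt_deriv t).const_mul _)).fun_sub
    ((hg.hasDerivAt_restoringForce t).fun_mul (hg.hasDerivAt_secularFactor t))).congr_deriv ?_
  rw [duffingSecond, duffingPotential]
  push_cast
  linear_combination (6 * A * m * g t) * hg.energy_eq_of_zero h₀ t

theorem isHillSolution_duffingSecond (hg : IsDuffingSolution A m g) (h₀ : g 0 = 0) :
    IsHillSolution (duffingPotential A m g) (duffingSecond A m g) :=
  .of_hasDerivAt hg.hasDerivAt_duffingSecond (hg.hasDerivAt_duffingSecondDeriv h₀)

theorem isNormalizedPair (hg : IsDuffingSolution A m g) (h₀ : g 0 = 0) (h₀' : deriv g 0 ≠ 0)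
    (hv : IsHillSolution (duffingPotential A m g) v) (hv₀ : v 0 = 0) (hv₀' : deriv v 0 = 1) :
    IsNormalizedPair (duffingPotential A m g) (fun t => deriv g t / deriv g 0) v where
  left := hg.isHillSolution_deriv.div_const _
  right := hv
  left_zero := div_self h₀'
  deriv_left_zero := by rw [deriv_div_const, hg.deriv_deriv_zero h₀, zero_div]
  right_zero := hv₀
  deriv_right_zero := hv₀'

theorem mul_right_period_eq {u : ℝ → ℝ} (hg : IsDuffingSolution A m g)
    (hper : Function.Periodic g T) (h₀ : g 0 = 0) (h₀' : deriv g 0 ≠ 0)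
    (h : IsNormalizedPair (duffingPotential A m g) u v) :
    (18 * A * m ^ 2 + 4 * deriv g 0 ^ 2) * v T
      = 2 * deriv g 0 ^ 2 * T - 3 * A * m * ∫ s in (0:ℝ)..T, g s ^ 2 := by
  have hw := h.eq_linear_combination (hg.isHillSolution_duffingSecond h₀) T
  rw [(hg.hasDerivAt_duffingSecond 0).deriv] at hw
  simp only [duffingSecond, duffingSecondDeriv, secularFactor, hper.eq, (periodic_deriv hper).eq,
    h₀, intervalIntegral.integral_same] at hw
  apply mul_left_cancel₀ h₀'
  linear_combination -hw

theorem right_period_pos {u : ℝ → ℝ} (hg : IsDuffingSolution A m g) (hA : 0 ≤ A) (hT : 0 < T)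
    (hper : Function.Periodic g T) (h₀ : g 0 = 0) (h₀' : deriv g 0 ≠ 0)
    (h : IsNormalizedPair (duffingPotential A m g) u v) : 0 < v T := by
  have : 0 < deriv g 0 ^ 2 * T := by positivity
  refine pos_of_mul_pos_right (a := 18 * A * m ^ 2 + 4 * deriv g 0 ^ 2) ?_ (by positivity)
  rw [hg.mul_right_period_eq hper h₀ h₀' h]
  linarith [hg.mul_integral_sq_le hA h₀ hT.le]

end IsDuffingSolution

theorem stmt_2_general {g : ℝ → ℝ} {A m T : ℝ} (hA : 0 ≤ A) (hT : 0 < T)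
    (hg : ContDiff ℝ 2 g) (hodd : Function.Odd g) (hper : Function.Periodic g T) (hne : g ≠ 0)
    (hode : ∀ t, deriv (deriv g) t + A * (3 * m * g t + g t ^ 3) = 0) :
    deriv g 0 ≠ 0 ∧
    Function.Even (fun t => deriv g t / deriv g 0) ∧
    Function.Periodic (fun t => deriv g t / deriv g 0) T ∧
    (∀ t, deriv (deriv fun t => deriv g t / deriv g 0) t
      + 3 * A * (m + g t ^ 2) * (deriv g t / deriv g 0) = 0) ∧
    deriv g 0 / deriv g 0 = 1 ∧
    deriv (fun t => deriv g t / deriv g 0) 0 = 0 ∧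
    ∀ v : ℝ → ℝ, ContDiff ℝ 2 v →
      (∀ t, deriv (deriv v) t + 3 * A * (m + g t ^ 2) * v t = 0) →
      v 0 = 0 → deriv v 0 = 1 →
      Function.Odd v ∧
      (¬ ∃ p, 0 < p ∧ Function.Periodic v p) ∧
      ∃ ρ, 0 < ρ ∧ ∀ t, v (t + T) - v t = ρ * (deriv g t / deriv g 0) := by
  have hsol := IsDuffingSolution.of_contDiff hg hode
  have h₀ : g 0 = 0 := hodd.map_zero
  have h₀' : deriv g 0 ≠ 0 := hsol.deriv_zero_ne_zero hA h₀ hne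
  have hu_per : Function.Periodic (fun t => deriv g t / deriv g 0) T :=
    (periodic_deriv hper).comp (· / deriv g 0)
  have hu_even : Function.Even (fun t => deriv g t / deriv g 0) :=
    (even_deriv_of_odd hodd).left_comp (· / deriv g 0)
  refine ⟨h₀', hu_even, hu_per, (hsol.isHillSolution_deriv.div_const _).deriv_deriv_add_eq_zero,
    div_self h₀', by rw [deriv_div_const, hsol.deriv_deriv_zero h₀, zero_div],
    fun v hv hv_ode hv₀ hv₀' => ?_⟩
  have hpair := hsol.isNormalizedPair h₀ h₀' (.of_contDiff hv hv_ode) hv₀ hv₀'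
  have hq_per : Function.Periodic (duffingPotential A m g) T := periodic_duffingPotential hper
  have hvT : 0 < v T := hsol.right_period_pos hA hT hper h₀ h₀' hpair
  exact ⟨hpair.odd_right (even_duffingPotential hodd),
    fun ⟨_, hp, hvp⟩ => hpair.not_periodic_right hq_per hu_per hvT.ne' hp.ne' hvp,
    v T, hvT, fun t => sub_eq_iff_eq_add'.2 (hpair.right_add_period hq_per hu_per t)⟩

theorem stmt_2 (g : ℝ → ℝ)
    (han : ∀ t : ℝ, AnalyticAt ℝ g t)
    (hodd : ∀ t : ℝ, g (-t) = -g t)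
    (hper : Function.Periodic g (2 * π))
    (hne : g ≠ 0)
    (A : ℝ) (hA : A = avg (fun s => g s ^ 4) + 3 * avg (fun s => g s ^ 2) ^ 2)
    (hode : ∀ t : ℝ, deriv (deriv g) t
        + A * (3 * avg (fun s => g s ^ 2) * g t + g t ^ 3) = 0) :
    -- (i)  g'(0) ≠ 0 and ū := g'/g'(0) is an even, 2π-periodic solution of (HOM)
    deriv g 0 ≠ 0 ∧
    (∀ t : ℝ, (fun t => deriv g t / deriv g 0) (-t) = (fun t => deriv g t / deriv g 0) t) ∧
    Function.Periodic (fun t => deriv g t / deriv g 0) (2 * π) ∧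
    (∀ t : ℝ, deriv (deriv (fun t => deriv g t / deriv g 0)) t
        + 3 * A * (avg (fun s => g s ^ 2) + g t ^ 2)
          * (fun t => deriv g t / deriv g 0) t = 0) ∧
    (fun t => deriv g t / deriv g 0) 0 = 1 ∧
    deriv (fun t => deriv g t / deriv g 0) 0 = 0 ∧
    -- (ii), (iii)  the solution v̄ with v̄(0) = 0, v̄'(0) = 1 is odd, not periodic,
    -- and v̄(t + 2π) − v̄(t) = ρ ū(t) for some ρ > 0
    (∀ v : ℝ → ℝ, ContDiff ℝ 2 v →
      (∀ t : ℝ, deriv (deriv v) t + 3 * A * (avg (fun s => g s ^ 2) + g t ^ 2) * v t = 0) →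
      v 0 = 0 → deriv v 0 = 1 →
      (∀ t : ℝ, v (-t) = -v t) ∧
      (¬ ∃ p : ℝ, 0 < p ∧ Function.Periodic v p) ∧
      (∃ ρ : ℝ, 0 < ρ ∧ ∀ t : ℝ, v (t + 2 * π) - v t = ρ * (deriv g t / deriv g 0))) := by
  have hA₀ : 0 ≤ A :=
    hA ▸ add_nonneg (avg_nonneg fun t => by positivity) (by positivity)
  exact stmt_2_general hA₀ two_pi_pos (contDiff_iff_contDiffAt.2 fun t => (han t).contDiffAt)
    hodd hper hne hode
end

section
/- Let g : ℝ → ℝ be C², odd, 2π-periodic and satisfy g'' + A(g)(3⟨g²⟩ g + g³) = 0 on ℝ, where A(g) := ⟨g⁴⟩ + 3⟨g²⟩². If H₁ : ℝ → ℝ is C², odd, 2π-periodic and satisfies H₁'' + 3A(g)(⟨g²⟩ + g²)H₁ = g on ℝ, then 2A(g)⟨g³ H₁⟩ = ⟨g²⟩. If H₃ : ℝ → ℝ is C², odd, 2π-periodic and satisfies H₃'' + 3A(g)(⟨g²⟩ + g²)H₃ = g³ on ℝ, then 2A(g)⟨g³ H₃⟩ = ⟨g⁴⟩. -/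
open Real

/-!
Let `L = d²/dt² + q` with `q = 3 A (⟨g²⟩ + g²)` be the linearization of the equation at `g`, with
`A` and `⟨g²⟩` held constant. The equation for `g` says `L g = 2 A g³`, and `L` is symmetric on
periodic functions. Hence a periodic solution of `L H = r` satisfies
`2 A ⟨g³ H⟩ = ⟨(L g) H⟩ = ⟨g (L H)⟩ = ⟨g r⟩`.
-/

section Periodic

theorem periodic_deriv_s4 {𝕜 F : Type*} [NontriviallyNormedField 𝕜] [NormedAddCommGroup F]
    [NormedSpace 𝕜 F] {f : 𝕜 → F} {c : 𝕜} (hf : Function.Periodic f c) :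
    Function.Periodic (deriv f) c := fun x => by
  rw [← deriv_comp_add_const, hf.funext]

variable {R : Type*} [NormedRing R] [NormedAlgebra ℝ R] [CompleteSpace R] {u v : ℝ → R} {T : ℝ}

theorem integral_mul_deriv_eq_neg_of_periodic (hu : ContDiff ℝ 1 u) (hv : ContDiff ℝ 1 v)
    (hut : Function.Periodic u T) (hvt : Function.Periodic v T) (a : ℝ) :
    ∫ t in a..a + T, u t * deriv v t = -∫ t in a..a + T, deriv u t * v t := by
  rw [intervalIntegral.integral_mul_deriv_eq_deriv_mul
    (fun t _ => (hu.differentiable_one t).hasDerivAt)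
    (fun t _ => (hv.differentiable_one t).hasDerivAt)
    (hu.continuous_deriv_one.intervalIntegrable _ _)
    (hv.continuous_deriv_one.intervalIntegrable _ _), hut a, hvt a, sub_self, zero_sub]

theorem integral_mul_deriv_deriv_of_periodic (hu : ContDiff ℝ 2 u) (hv : ContDiff ℝ 2 v)
    (hut : Function.Periodic u T) (hvt : Function.Periodic v T) (a : ℝ) :
    ∫ t in a..a + T, u t * deriv (deriv v) t = ∫ t in a..a + T, deriv (deriv u) t * v t := by
  have hu' : ContDiff ℝ 1 (deriv u) := hu.deriv'
  have hv' : ContDiff ℝ 1 (deriv v) := hv.deriv'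
  calc ∫ t in a..a + T, u t * deriv (deriv v) t
      = -∫ t in a..a + T, deriv u t * deriv v t :=
        integral_mul_deriv_eq_neg_of_periodic (hu.of_le one_le_two) hv' hut (periodic_deriv_s4 hvt) a
    _ = ∫ t in a..a + T, deriv (deriv u) t * v t := by
        rw [integral_mul_deriv_eq_neg_of_periodic hu' (hv.of_le one_le_two) (periodic_deriv_s4 hut)
          hvt a, neg_neg]

end Periodic

/-- The Hill operator `u ↦ u'' + q u` with potential `q`; the linearization of a scalar equation
`u'' + f(u) = 0` has this form. The potential need not be periodic. -/
noncomputable def hillOperator (q u : ℝ → ℝ) (t : ℝ) : ℝ :=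
  deriv (deriv u) t + q t * u t

theorem integral_mul_hillOperator_of_periodic {q u v : ℝ → ℝ} {a T : ℝ}
    (hq : IntervalIntegrable q MeasureTheory.volume a (a + T))
    (hu : ContDiff ℝ 2 u) (hv : ContDiff ℝ 2 v)
    (hut : Function.Periodic u T) (hvt : Function.Periodic v T) :
    ∫ t in a..a + T, u t * hillOperator q v t = ∫ t in a..a + T, hillOperator q u t * v t := by
  have huv'' : Continuous (fun t => u t * deriv (deriv v) t) :=
    hu.continuous.mul hv.deriv'.continuous_deriv_one
  have hu''v : Continuous (fun t => deriv (deriv u) t * v t) :=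
    hu.deriv'.continuous_deriv_one.mul hv.continuous
  have hquv : IntervalIntegrable (fun t => q t * (u t * v t)) MeasureTheory.volume a (a + T) :=
    hq.mul_continuousOn (hu.continuous.mul hv.continuous).continuousOn
  calc ∫ t in a..a + T, u t * hillOperator q v t
      = ∫ t in a..a + T, (u t * deriv (deriv v) t + q t * (u t * v t)) := by
        simp only [hillOperator, mul_add, mul_left_comm]
    _ = ∫ t in a..a + T, (deriv (deriv u) t * v t + q t * (u t * v t)) := by
        rw [intervalIntegral.integral_add (huv''.intervalIntegrable _ _) hquv,
          intervalIntegral.integral_add (hu''v.intervalIntegrable _ _) hquv,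
          integral_mul_deriv_deriv_of_periodic hu hv hut hvt]
    _ = ∫ t in a..a + T, hillOperator q u t * v t := by
        simp only [hillOperator, add_mul, mul_assoc]

theorem avg_const_mul (c : ℝ) (f : ℝ → ℝ) : avg (fun t => c * f t) = c * avg f := by
  rw [avg, avg, intervalIntegral.integral_const_mul, mul_left_comm]

theorem avg_mul_hillOperator {q u v : ℝ → ℝ}
    (hq : IntervalIntegrable q MeasureTheory.volume 0 (2 * π))
    (hu : ContDiff ℝ 2 u) (hv : ContDiff ℝ 2 v)
    (hut : Function.Periodic u (2 * π)) (hvt : Function.Periodic v (2 * π)) :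
    avg (fun t => u t * hillOperator q v t) = avg (fun t => hillOperator q u t * v t) := by
  rw [← zero_add (2 * π)] at hq
  simpa only [avg, zero_add] using congrArg (1 / (2 * π) * ·)
    (integral_mul_hillOperator_of_periodic hq hu hv hut hvt)

theorem stmt_4_general {g H r : ℝ → ℝ} {A m : ℝ}
    (hg : ContDiff ℝ 2 g) (hper : Function.Periodic g (2 * π))
    (hode : ∀ t, deriv (deriv g) t + A * (3 * m * g t + g t ^ 3) = 0)
    (hH : ContDiff ℝ 2 H) (hHper : Function.Periodic H (2 * π))
    (hlin : ∀ t, deriv (deriv H) t + 3 * A * (m + g t ^ 2) * H t = r t) :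
    2 * A * avg (fun t => g t ^ 3 * H t) = avg (fun t => g t * r t) := by
  let q : ℝ → ℝ := fun t => 3 * A * (m + g t ^ 2)
  have hq : Continuous q := ((hg.continuous.pow 2).const_add m).const_mul (3 * A)
  have hLg (t : ℝ) : hillOperator q g t = 2 * A * g t ^ 3 := by
    simp only [hillOperator, q]
    linear_combination hode t
  have hLH (t : ℝ) : hillOperator q H t = r t := hlin t
  calc 2 * A * avg (fun t => g t ^ 3 * H t)
      = avg (fun t => hillOperator q g t * H t) := by
        simp only [hLg, mul_assoc (2 * A), avg_const_mul]
    _ = avg (fun t => g t * hillOperator q H t) :=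
        (avg_mul_hillOperator (hq.intervalIntegrable _ _) hg hH hper hHper).symm
    _ = avg (fun t => g t * r t) := by simp only [hLH]

theorem stmt_4 (g : ℝ → ℝ)
    (hg : ContDiff ℝ 2 g)
    (hodd : ∀ t : ℝ, g (-t) = -g t)
    (hper : Function.Periodic g (2 * π))
    (A : ℝ) (hA : A = avg (fun s => g s ^ 4) + 3 * avg (fun s => g s ^ 2) ^ 2)
    (hode : ∀ t : ℝ, deriv (deriv g) t
        + A * (3 * avg (fun s => g s ^ 2) * g t + g t ^ 3) = 0) :
    (∀ H₁ : ℝ → ℝ, ContDiff ℝ 2 H₁ → (∀ t : ℝ, H₁ (-t) = -H₁ t) →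
      Function.Periodic H₁ (2 * π) →
      (∀ t : ℝ, deriv (deriv H₁) t
          + 3 * A * (avg (fun s => g s ^ 2) + g t ^ 2) * H₁ t = g t) →
      2 * A * avg (fun s => g s ^ 3 * H₁ s) = avg (fun s => g s ^ 2)) ∧
    (∀ H₃ : ℝ → ℝ, ContDiff ℝ 2 H₃ → (∀ t : ℝ, H₃ (-t) = -H₃ t) →
      Function.Periodic H₃ (2 * π) →
      (∀ t : ℝ, deriv (deriv H₃) t
          + 3 * A * (avg (fun s => g s ^ 2) + g t ^ 2) * H₃ t = g t ^ 3) →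
      2 * A * avg (fun s => g s ^ 3 * H₃ s) = avg (fun s => g s ^ 4)) := by
  refine ⟨fun _ hH _ hHper hlin => ?_, fun _ hH _ hHper hlin => ?_⟩
  · simpa only [← sq] using stmt_4_general hg hper hode hH hHper hlin
  · simpa only [← pow_succ'] using stmt_4_general hg hper hode hH hHper hlin
end
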